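/- Let $R_d > 0$ and $0 < R_g < 2 R_d \le x_Q$. Then $\int_{R_g}^{x_Q} \frac{2r}{x_Q^2 - R_g^2}\, S_{u1}(r)\, dr = F_2(x_Q)$, where $S_{u1}(r) = 2\pi R_d^2 - \left[2R_d^2 \arccos\left(\frac{r}{2R_d}\right) - r\sqrt{R_d^2 - \frac{r^2}{4}}\right]$ for $R_g \le r \le 2R_d$, $S_{u1}(r) = 2\pi R_d^2$ for $2R_d < r \le x_Q$, and $F_2(x_Q) = \frac{1}{x_Q^2 - R_g^2}\Big\{ 2\pi R_d^2 (x_Q^2 - R_g^2) + \pi R_d^4 - 2 R_d^4 \arctan\left(\frac{R_g}{\sqrt{4R_d^2 - R_g^2}}\right) - 2 R_d^2 \arccos\left(\frac{R_g}{2R_d}\right)(2R_d^2 - R_g^2) - \frac{1}{4} R_g \sqrt{4R_d^2 - R_g^2}\,(2R_d^2 + R_g^2)\Big\}$. (Here $\operatorname{arccot}(z)$ for $z > 0$ has been written as $\arctan(1/z)$.) -/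

import Mathlib

open MeasureTheory intervalIntegral Real

/-! The closed form for the overlap of two discs is `0` for `r ≥ 2R`, where Mathlib's `arccos`
and `√` both take the value `0`; hence `S_u1 = 2πR² - S_ol` holds on the whole half-line `r ≥ 0`
and only `∫ 2r S_ol(r) dr` over `[R_g, 2R]` has to be computed. The substitution `r = 2Ru` turns it
into a multiple of `∫ u (arccos u - u √(1 - u²)) du` over `[R_g / 2R, 1]`, whose integrand has the
antiderivative `((4u² - 1) arccos u - u (1 + 2u²) √(1 - u²)) / 8`, which vanishes at `u = 1`.
The arctangent in `F₂` enters through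
`arctan (x / √(c² - x²)) = arcsin (x / c) = π/2 - arccos (x / c)`. -/

theorem sqrt_sq_sub_sq_eq_mul_sqrt {c : ℝ} (hc : 0 < c) (x : ℝ) :
    √(c ^ 2 - x ^ 2) = c * √(1 - (x / c) ^ 2) := by
  have hfactor : c ^ 2 - x ^ 2 = c ^ 2 * (1 - (x / c) ^ 2) := by field_simp
  rw [hfactor, sqrt_mul (sq_nonneg c), sqrt_sq hc.le]

theorem arctan_div_sqrt_sq_sub_sq {c x : ℝ} (hx : |x| < c) :
    arctan (x / √(c ^ 2 - x ^ 2)) = arcsin (x / c) := by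
  have hc : 0 < c := (abs_nonneg x).trans_lt hx
  have hxc : x / c ∈ Set.Ioo (-1 : ℝ) 1 := by
    rwa [Set.mem_Ioo, ← abs_lt, abs_div, abs_of_pos hc, div_lt_one hc]
  rw [arcsin_eq_arctan hxc, sqrt_sq_sub_sq_eq_mul_sqrt hc, div_div]

theorem hasDerivAt_sqrt_one_sub_sq {u : ℝ} (hu : u ∈ Set.Ioo (-1 : ℝ) 1) :
    HasDerivAt (fun u ↦ √(1 - u ^ 2)) (-u / √(1 - u ^ 2)) u := by
  have hpos : 0 < 1 - u ^ 2 := by nlinarith [hu.1, hu.2]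
  refine (((hasDerivAt_pow 2 u).const_sub 1).sqrt hpos.ne').congr_deriv ?_
  field_simp
  norm_num

theorem hasDerivAt_antideriv_mul_arccos_sub {u : ℝ} (hu : u ∈ Set.Ioo (-1 : ℝ) 1) :
    HasDerivAt (fun u ↦ ((4 * u ^ 2 - 1) * arccos u - u * (1 + 2 * u ^ 2) * √(1 - u ^ 2)) / 8)
      (u * (arccos u - u * √(1 - u ^ 2))) u := by
  have hpos : 0 < 1 - u ^ 2 := by nlinarith [hu.1, hu.2]
  have : 0 < √(1 - u ^ 2) := sqrt_pos.2 hpos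
  have hsqrt_sq : √(1 - u ^ 2) ^ 2 = 1 - u ^ 2 := sq_sqrt hpos.le
  have hquad : HasDerivAt (fun u : ℝ ↦ 4 * u ^ 2 - 1) (8 * u) u :=
    (((hasDerivAt_pow 2 u).const_mul 4).sub_const 1).congr_deriv (by ring)
  have hcubic : HasDerivAt (fun u : ℝ ↦ u * (1 + 2 * u ^ 2)) (1 + 6 * u ^ 2) u :=
    ((hasDerivAt_id' u).mul (((hasDerivAt_pow 2 u).const_mul 2).const_add 1)).congr_deriv (by ring)
  have harccos := hasDerivAt_arccos hu.1.ne' hu.2.ne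
  refine (((hquad.mul harccos).sub
    (hcubic.mul (hasDerivAt_sqrt_one_sub_sq hu))).div_const 8).congr_deriv ?_
  field_simp
  linear_combination (2 * u ^ 2 - 1) * hsqrt_sq

theorem integral_mul_arccos_sub {c : ℝ} (hc : c ∈ Set.Icc (-1 : ℝ) 1) :
    ∫ u in c..1, u * (arccos u - u * √(1 - u ^ 2)) =
      ((1 - 4 * c ^ 2) * arccos c + c * (1 + 2 * c ^ 2) * √(1 - c ^ 2)) / 8 := by
  have : Continuous arccos := continuous_arccos
  rw [integral_eq_sub_of_hasDerivAt_of_le hc.2 (by fun_prop)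
    (fun u hu ↦ hasDerivAt_antideriv_mul_arccos_sub ⟨hc.1.trans_lt hu.1, hu.2⟩)
    (Continuous.intervalIntegrable (by fun_prop) _ _)]
  simp only [arccos_one, one_pow, sub_self, sqrt_zero]
  ring

/-- The area `S_ol` of the intersection of two discs of radius `R > 0` whose centres are at distance
`r ≥ 0`. No case distinction is needed: for `r ≥ 2R` both `arccos` and `√` evaluate to `0`. -/
noncomputable def discOverlapArea (R r : ℝ) : ℝ :=
  2 * R ^ 2 * arccos (r / (2 * R)) - r * √(R ^ 2 - r ^ 2 / 4)

/-- The area `S_u1` of the union of two discs of radius `R > 0` whose centres are at distance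
`r ≥ 0`, by inclusion-exclusion. -/
noncomputable def discUnionArea (R r : ℝ) : ℝ :=
  2 * π * R ^ 2 - discOverlapArea R r

theorem continuous_discOverlapArea (R : ℝ) : Continuous (discOverlapArea R) := by
  have : Continuous arccos := continuous_arccos
  unfold discOverlapArea
  fun_prop

section

variable {R : ℝ}

theorem discOverlapArea_two_mul_mul (hR : 0 < R) (u : ℝ) :
    discOverlapArea R (2 * R * u) = 2 * R ^ 2 * (arccos u - u * √(1 - u ^ 2)) := by
  have hdiv : 2 * R * u / (2 * R) = u := mul_div_cancel_left₀ u (by positivity)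
  have hsqrt : √(R ^ 2 - (2 * R * u) ^ 2 / 4) = R * √(1 - u ^ 2) := by
    have h := sqrt_sq_sub_sq_eq_mul_sqrt hR (R * u)
    rw [mul_div_cancel_left₀ u hR.ne'] at h
    rw [← h]
    ring_nf
  rw [discOverlapArea, hdiv, hsqrt]
  ring

theorem discOverlapArea_eq_zero (hR : 0 < R) {r : ℝ} (hr : 2 * R ≤ r) :
    discOverlapArea R r = 0 := by
  have harccos : arccos (r / (2 * R)) = 0 :=
    arccos_eq_zero.2 ((one_le_div (by positivity)).2 hr)
  have hsqrt : √(R ^ 2 - r ^ 2 / 4) = 0 := sqrt_eq_zero_of_nonpos (by nlinarith)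
  rw [discOverlapArea, harccos, hsqrt, mul_zero, mul_zero, sub_zero]

theorem ite_eq_discUnionArea (hR : 0 < R) (r : ℝ) :
    (if r ≤ 2 * R then
        2 * π * R ^ 2 - (2 * R ^ 2 * arccos (r / (2 * R)) - r * √(R ^ 2 - r ^ 2 / 4))
      else 2 * π * R ^ 2) = discUnionArea R r := by
  split_ifs with hr
  · rfl
  · rw [discUnionArea, discOverlapArea_eq_zero hR (le_of_not_ge hr), sub_zero]

theorem integral_mul_discOverlapArea_two_mul_mul (hR : 0 < R) {c : ℝ}
    (hc : c ∈ Set.Icc (-1 : ℝ) 1) :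
    ∫ r in (2 * R * c)..(2 * R), r * discOverlapArea R r =
      R ^ 4 * ((1 - 4 * c ^ 2) * arccos c + c * (1 + 2 * c ^ 2) * √(1 - c ^ 2)) :=
  calc ∫ r in (2 * R * c)..(2 * R), r * discOverlapArea R r
    _ = 2 * R * ∫ u in c..1, 2 * R * u * discOverlapArea R (2 * R * u) := by
      rw [mul_integral_comp_mul_left (f := fun r ↦ r * discOverlapArea R r), mul_one]
    _ = 2 * R * ∫ u in c..1, 4 * R ^ 3 * (u * (arccos u - u * √(1 - u ^ 2))) := by
      congr 2 with u
      rw [discOverlapArea_two_mul_mul hR]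
      ring
    _ = R ^ 4 * ((1 - 4 * c ^ 2) * arccos c + c * (1 + 2 * c ^ 2) * √(1 - c ^ 2)) := by
      rw [intervalIntegral.integral_const_mul, integral_mul_arccos_sub hc]
      ring

theorem integral_mul_discOverlapArea (hR : 0 < R) {a b : ℝ} (ha : |a| ≤ 2 * R)
    (hb : 2 * R ≤ b) :
    ∫ r in a..b, r * discOverlapArea R r =
      R ^ 2 * (R ^ 2 - a ^ 2) * arccos (a / (2 * R)) +
        a * (2 * R ^ 2 + a ^ 2) * √((2 * R) ^ 2 - a ^ 2) / 8 := by
  have hcont : Continuous fun r ↦ r * discOverlapArea R r :=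
    continuous_id.mul (continuous_discOverlapArea R)
  have htail : ∫ r in (2 * R)..b, r * discOverlapArea R r = 0 := by
    refine integral_zero_ae (.of_forall fun r hr ↦ ?_)
    rw [Set.uIoc_of_le hb] at hr
    rw [discOverlapArea_eq_zero hR hr.1.le, mul_zero]
  have h2R : 0 < 2 * R := by positivity
  have hratio : a / (2 * R) ∈ Set.Icc (-1 : ℝ) 1 := by
    rwa [Set.mem_Icc, ← abs_le, abs_div, abs_of_pos h2R, div_le_one h2R]
  have hmain := integral_mul_discOverlapArea_two_mul_mul hR hratio
  rw [mul_div_cancel₀ a h2R.ne'] at hmain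
  rw [← integral_add_adjacent_intervals (hcont.intervalIntegrable a (2 * R))
    (hcont.intervalIntegrable (2 * R) b), htail, add_zero, hmain, sqrt_sq_sub_sq_eq_mul_sqrt h2R]
  field_simp
  ring

theorem integral_two_mul_mul_discUnionArea (hR : 0 < R) {a b : ℝ} (ha : |a| ≤ 2 * R)
    (hb : 2 * R ≤ b) :
    ∫ r in a..b, 2 * r * discUnionArea R r =
      2 * π * R ^ 2 * (b ^ 2 - a ^ 2) - 2 * R ^ 2 * (R ^ 2 - a ^ 2) * arccos (a / (2 * R)) -
        1 / 4 * a * √((2 * R) ^ 2 - a ^ 2) * (2 * R ^ 2 + a ^ 2) := by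
  have hcont := continuous_discOverlapArea R
  have hsplit : ∀ r, 2 * r * discUnionArea R r =
      4 * π * R ^ 2 * r - 2 * (r * discOverlapArea R r) := fun r ↦ by
    rw [discUnionArea]
    ring
  simp only [hsplit]
  rw [integral_sub (Continuous.intervalIntegrable (by fun_prop) _ _)
    (Continuous.intervalIntegrable (by fun_prop) _ _), intervalIntegral.integral_const_mul,
    intervalIntegral.integral_const_mul, integral_id, integral_mul_discOverlapArea hR ha hb]
  ring

end

/-- For `Rg < 2 R_d ≤ xQ`, the expected union sensing area of an S-C pair equals
`F₂(xQ)` as given in the paper (with `arccot z` written as `arctan (1/z)`). -/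
theorem expected_union_area_F2 (Rd Rg xQ : ℝ) (hRd : 0 < Rd) (hRg : 0 < Rg)
    (hlt : Rg < 2 * Rd) (hxQ : 2 * Rd ≤ xQ) :
    ∫ r in Rg..xQ,
        (2 * r / (xQ ^ 2 - Rg ^ 2)) *
          (if r ≤ 2 * Rd then
              2 * Real.pi * Rd ^ 2 -
                (2 * Rd ^ 2 * Real.arccos (r / (2 * Rd)) -
                  r * Real.sqrt (Rd ^ 2 - r ^ 2 / 4))
            else 2 * Real.pi * Rd ^ 2)
      = (1 / (xQ ^ 2 - Rg ^ 2)) *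
          (2 * Real.pi * Rd ^ 2 * (xQ ^ 2 - Rg ^ 2) + Real.pi * Rd ^ 4
            - 2 * Rd ^ 4 * Real.arctan (Rg / Real.sqrt (4 * Rd ^ 2 - Rg ^ 2))
            - 2 * Rd ^ 2 * Real.arccos (Rg / (2 * Rd)) * (2 * Rd ^ 2 - Rg ^ 2)
            - (1 / 4) * Rg * Real.sqrt (4 * Rd ^ 2 - Rg ^ 2) * (2 * Rd ^ 2 + Rg ^ 2)) := by
  have habs : |Rg| < 2 * Rd := by rwa [abs_of_pos hRg]
  have hdensity : ∀ r, 2 * r / (xQ ^ 2 - Rg ^ 2) * discUnionArea Rd r =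
      1 / (xQ ^ 2 - Rg ^ 2) * (2 * r * discUnionArea Rd r) := fun r ↦ by ring
  have hfour : 4 * Rd ^ 2 = (2 * Rd) ^ 2 := by ring
  simp only [ite_eq_discUnionArea hRd, hdensity]
  rw [intervalIntegral.integral_const_mul,
    integral_two_mul_mul_discUnionArea hRd habs.le hxQ, hfour,
    arctan_div_sqrt_sq_sub_sq habs, arcsin_eq_pi_div_two_sub_arccos]
  ring
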